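/- Let 1<p<2 with conjugate exponent q = p/(p-1), and let {ψ_j : j≥0} ⊂ ℝ satisfy Σ_{j=0}^∞ |ψ_j|^p < ∞. Then for every n≥1, sup_{m∈ℤ} |w_{nm}|^p ≤ p·(Σ_{j=-∞}^∞ |w_{nj}|^p)^{1/q}·(2^p·Σ_{j=0}^∞ |ψ_j|^p)^{1/p} + 2^p·p·Σ_{j=0}^∞ |ψ_j|^p. -/

import Mathlib

open Filter

/-- The coefficients `ψ` extended to `ℤ` by `ψ_j = 0` for `j < 0`. -/
noncomputable def psiZ (ψ : ℕ → ℝ) : ℤ → ℝ := fun j => if 0 ≤ j then ψ j.toNat else 0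

/-- `w_{nj} = ∑_{k=1}^n ψ_{k-j}`. -/
noncomputable def wCoef (ψ : ℕ → ℝ) (n : ℕ) (j : ℤ) : ℝ :=
  ∑ k ∈ Finset.Icc (1 : ℤ) (n : ℤ), psiZ ψ (k - j)

/-- `𝒲_n(p) = (∑_{j=-∞}^n |w_{nj}|^p)^{1/p}`; since `w_{nj} = 0` for `j > n`, the sum
may be taken over all of `ℤ`. -/
noncomputable def Wnorm (ψ : ℕ → ℝ) (p : ℝ) (n : ℕ) : ℝ :=
  (∑' j : ℤ, |wCoef ψ n j| ^ p) ^ (1 / p)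

/-!
Since `w` vanishes at `+∞`, `|w_m|^p` is the telescoping sum over `j ≥ m` of
`|w_j|^p - |w_{j+1}|^p`. By Young's inequality each term is at most
`p |w_j|^(p-1) |w_j - w_{j+1}|`, so Hölder's inequality bounds `|w_m|^p` by
`p ‖w‖_p^(p/q) ‖Δw‖_p`. The differences `Δw` of `w_{nj}` are themselves differences of two
translates of `ψ`, whence `‖Δw‖_p^p ≤ 2^p ‖ψ‖_p^p`; this makes the second term of the stated
bound superfluous.
-/

open scoped Topology

section Pointwise

variable {p q : ℝ} {E : Type*} [SeminormedAddCommGroup E]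

theorem rpow_sub_one_rpow (hpq : p.HolderConjugate q) {a : ℝ} (ha : 0 ≤ a) :
    (a ^ (p - 1)) ^ q = a ^ p := by
  rw [← Real.rpow_mul ha, hpq.sub_one_mul_conj]

theorem rpow_sub_rpow_le_mul_sub (hp : 1 < p) {a b : ℝ} (ha : 0 ≤ a) (hb : 0 ≤ b) :
    a ^ p - b ^ p ≤ p * (a ^ (p - 1) * (a - b)) := by
  have hpq := Real.HolderConjugate.conjExponent hp
  have young : a ^ (p - 1) * b ≤ a ^ p / p.conjExponent + b ^ p / p := by
    simpa only [rpow_sub_one_rpow hpq ha] using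
      Real.young_inequality_of_nonneg (Real.rpow_nonneg ha (p - 1)) hb hpq.symm
  have hpow : a ^ (p - 1) * a = a ^ p := by
    rw [← Real.rpow_add_one' ha (by simpa using hpq.ne_zero), sub_add_cancel]
  have young_mul : p * (a ^ (p - 1) * b) ≤ (p - 1) * a ^ p + b ^ p := by
    calc p * (a ^ (p - 1) * b) ≤ p * (a ^ p / p.conjExponent + b ^ p / p) :=
          mul_le_mul_of_nonneg_left young hpq.nonneg
      _ = p / p.conjExponent * a ^ p + b ^ p := by
          rw [mul_add, mul_div_cancel₀ _ hpq.ne_zero]; ring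
      _ = (p - 1) * a ^ p + b ^ p := by rw [hpq.div_conj_eq_sub_one]
  rw [mul_sub, hpow]
  linarith

theorem norm_rpow_sub_norm_rpow_le (hp : 1 < p) (x y : E) :
    ‖x‖ ^ p - ‖y‖ ^ p ≤ p * (‖x‖ ^ (p - 1) * ‖x - y‖) := by
  refine (rpow_sub_rpow_le_mul_sub hp (norm_nonneg x) (norm_nonneg y)).trans ?_
  gcongr
  exact norm_sub_norm_le x y

theorem norm_sub_rpow_le (hp : 1 ≤ p) (x y : E) :
    ‖x - y‖ ^ p ≤ 2 ^ (p - 1) * (‖x‖ ^ p + ‖y‖ ^ p) :=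
  calc ‖x - y‖ ^ p ≤ (‖x‖ + ‖y‖) ^ p := by gcongr; exact norm_sub_le x y
    _ ≤ 2 ^ (p - 1) * (‖x‖ ^ p + ‖y‖ ^ p) :=
      mod_cast NNReal.rpow_add_le_mul_rpow_add_rpow ‖x‖₊ ‖y‖₊ hp

end Pointwise

section PowerSums

variable {p : ℝ} {ι E : Type*} [NormedAddCommGroup E]

theorem summable_norm_rpow_iff_memℓp (hp : 0 < p) {f : ι → E} :
    (Summable fun i => ‖f i‖ ^ p) ↔ Memℓp f (ENNReal.ofReal p) := by
  rw [memℓp_gen_iff (by rwa [ENNReal.toReal_ofReal hp.le]), ENNReal.toReal_ofReal hp.le]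

theorem summable_norm_sub_rpow (hp : 0 < p) {f g : ι → E}
    (hf : Summable fun i => ‖f i‖ ^ p) (hg : Summable fun i => ‖g i‖ ^ p) :
    Summable fun i => ‖f i - g i‖ ^ p := by
  rw [summable_norm_rpow_iff_memℓp hp] at hf hg
  exact (summable_norm_rpow_iff_memℓp hp).2 (hf.sub hg)

theorem summable_norm_sum_rpow (hp : 0 < p) {κ : Type*} (s : Finset κ) {f : κ → ι → E}
    (hf : ∀ k ∈ s, Summable fun i => ‖f k i‖ ^ p) :
    Summable fun i => ‖∑ k ∈ s, f k i‖ ^ p := by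
  simp only [summable_norm_rpow_iff_memℓp hp] at hf ⊢
  exact Memℓp.finsetSum s hf

theorem tsum_norm_sub_rpow_le (hp : 1 ≤ p) {f g : ι → E}
    (hf : Summable fun i => ‖f i‖ ^ p) (hg : Summable fun i => ‖g i‖ ^ p) :
    ∑' i, ‖f i - g i‖ ^ p ≤ 2 ^ (p - 1) * (∑' i, ‖f i‖ ^ p + ∑' i, ‖g i‖ ^ p) := by
  rw [← hf.tsum_add hg, ← tsum_mul_left]
  exact (summable_norm_sub_rpow (by positivity) hf hg).tsum_le_tsum
    (fun i => norm_sub_rpow_le hp (f i) (g i)) ((hf.add hg).mul_left _)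

end PowerSums

section Interpolation

variable {p q : ℝ} {E : Type*} [NormedAddCommGroup E]

theorem sub_le_tsum_of_sub_succ_le {g d : ℕ → ℝ} {l : ℝ} (hg : Tendsto g atTop (𝓝 l))
    (hd : Summable d) (hgd : ∀ k, g k - g (k + 1) ≤ d k) : g 0 - l ≤ ∑' k, d k := by
  refine le_of_tendsto_of_tendsto' (hg.const_sub (g 0)) hd.hasSum.tendsto_sum_nat fun N => ?_
  rw [← Finset.sum_range_sub']
  exact Finset.sum_le_sum fun k _ => hgd k

theorem norm_apply_zero_rpow_le_tsum_mul_tsum_sub (hpq : p.HolderConjugate q) {f : ℕ → E}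
    (hf : Summable fun k => ‖f k‖ ^ p) :
    ‖f 0‖ ^ p ≤ p * ((∑' k, ‖f k‖ ^ p) ^ (1 / q) * (∑' k, ‖f k - f (k + 1)‖ ^ p) ^ (1 / p)) := by
  have hdiff : Summable fun k => ‖f k - f (k + 1)‖ ^ p :=
    summable_norm_sub_rpow hpq.pos hf ((summable_nat_add_iff 1).2 hf)
  have hpow (k : ℕ) : (‖f k‖ ^ (p - 1)) ^ q = ‖f k‖ ^ p := rpow_sub_one_rpow hpq (norm_nonneg _)
  obtain ⟨hsum, hölder⟩ := Real.summable_and_inner_le_Lp_mul_Lq_tsum_of_nonneg hpq.symm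
    (f := fun k => ‖f k‖ ^ (p - 1)) (g := fun k => ‖f k - f (k + 1)‖)
    (fun _ => by positivity) (fun _ => by positivity) (by simpa only [hpow] using hf) hdiff
  simp only [hpow] at hölder
  calc ‖f 0‖ ^ p = ‖f 0‖ ^ p - 0 := (sub_zero _).symm
    _ ≤ ∑' k, p * (‖f k‖ ^ (p - 1) * ‖f k - f (k + 1)‖) :=
      sub_le_tsum_of_sub_succ_le hf.tendsto_atTop_zero (hsum.mul_left p) fun k =>
        norm_rpow_sub_norm_rpow_le hpq.lt (f k) (f (k + 1))
    _ = p * ∑' k, ‖f k‖ ^ (p - 1) * ‖f k - f (k + 1)‖ := tsum_mul_left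
    _ ≤ _ := mul_le_mul_of_nonneg_left hölder hpq.nonneg

theorem norm_apply_rpow_le_tsum_mul_tsum_sub (hpq : p.HolderConjugate q) {f : ℤ → E}
    (hf : Summable fun j => ‖f j‖ ^ p) (m : ℤ) :
    ‖f m‖ ^ p ≤ p * ((∑' j, ‖f j‖ ^ p) ^ (1 / q) * (∑' j, ‖f j - f (j + 1)‖ ^ p) ^ (1 / p)) := by
  have hdiff : Summable fun j => ‖f j - f (j + 1)‖ ^ p :=
    summable_norm_sub_rpow hpq.pos hf ((Equiv.addRight (1 : ℤ)).summable_iff.2 hf)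
  have hinj : Function.Injective fun k : ℕ => m + k :=
    (add_right_injective m).comp Nat.cast_injective
  have hq := hpq.symm.nonneg
  have hp := hpq.nonneg
  calc ‖f m‖ ^ p
      ≤ p * ((∑' k : ℕ, ‖f (m + k)‖ ^ p) ^ (1 / q) *
          (∑' k : ℕ, ‖f (m + k) - f (m + k + 1)‖ ^ p) ^ (1 / p)) := by
        simpa [add_assoc] using
          norm_apply_zero_rpow_le_tsum_mul_tsum_sub hpq (f := fun k : ℕ => f (m + k))
            (hf.comp_injective hinj)
    _ ≤ _ := by
        gcongr
        · exact tsum_comp_le_tsum_of_inj hf (fun _ => by positivity) hinj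
        · exact tsum_comp_le_tsum_of_inj hdiff (fun _ => by positivity) hinj

end Interpolation

section Coefficients

variable {p : ℝ} {ψ : ℕ → ℝ}

theorem hasSum_abs_psiZ_rpow (hp : p ≠ 0) (hψ : Summable fun j => |ψ j| ^ p) :
    HasSum (fun j : ℤ => |psiZ ψ j| ^ p) (∑' j, |ψ j| ^ p) := by
  have hzero (j : ℤ) (hj : j ∉ Set.range ((↑) : ℕ → ℤ)) : |psiZ ψ j| ^ p = 0 := by
    have hneg : ¬ 0 ≤ j := fun h => hj ⟨j.toNat, Int.toNat_of_nonneg h⟩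
    rw [psiZ, if_neg hneg, abs_zero, Real.zero_rpow hp]
  refine (Nat.cast_injective.hasSum_iff hzero).1 ?_
  simpa [Function.comp_def, psiZ] using hψ.hasSum

theorem hasSum_abs_psiZ_sub_rpow (hp : p ≠ 0) (hψ : Summable fun j => |ψ j| ^ p) (c : ℤ) :
    HasSum (fun j : ℤ => |psiZ ψ (c - j)| ^ p) (∑' j, |ψ j| ^ p) :=
  (Equiv.subLeft c).hasSum_iff.2 (hasSum_abs_psiZ_rpow hp hψ)

theorem wCoef_eq_sum_range (ψ : ℕ → ℝ) (n : ℕ) (j : ℤ) :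
    wCoef ψ n j = ∑ i ∈ Finset.range n, psiZ ψ (i + 1 - j) := by
  simp [wCoef, Int.Icc_eq_finset_map, add_comm]

theorem wCoef_sub_wCoef_add_one (ψ : ℕ → ℝ) (n : ℕ) (j : ℤ) :
    wCoef ψ n j - wCoef ψ n (j + 1) = psiZ ψ (n - j) - psiZ ψ (0 - j) := by
  have htelescope := Finset.sum_range_sub (fun i : ℕ => psiZ ψ (i - j)) n
  simpa only [wCoef_eq_sum_range, ← Finset.sum_sub_distrib, Nat.cast_add, Nat.cast_one,
    Nat.cast_zero, add_sub_add_right_eq_sub] using htelescope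

theorem summable_abs_wCoef_rpow (hp : 0 < p) (hψ : Summable fun j => |ψ j| ^ p) (n : ℕ) :
    Summable fun j : ℤ => |wCoef ψ n j| ^ p := by
  simpa only [wCoef, Real.norm_eq_abs] using
    summable_norm_sum_rpow hp (Finset.Icc (1 : ℤ) n) (f := fun k j => psiZ ψ (k - j))
      fun k _ => (hasSum_abs_psiZ_sub_rpow hp.ne' hψ k).summable

theorem tsum_abs_wCoef_sub_wCoef_add_one_rpow_le (hp : 1 ≤ p)
    (hψ : Summable fun j => |ψ j| ^ p) (n : ℕ) :
    ∑' j : ℤ, |wCoef ψ n j - wCoef ψ n (j + 1)| ^ p ≤ 2 ^ p * ∑' j, |ψ j| ^ p := by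
  have htranslate (c : ℤ) : HasSum (fun j : ℤ => |psiZ ψ (c - j)| ^ p) (∑' j, |ψ j| ^ p) :=
    hasSum_abs_psiZ_sub_rpow (by positivity) hψ c
  simp only [wCoef_sub_wCoef_add_one]
  calc ∑' j : ℤ, |psiZ ψ (n - j) - psiZ ψ (0 - j)| ^ p
      ≤ 2 ^ (p - 1) * (∑' j : ℤ, |psiZ ψ (n - j)| ^ p + ∑' j : ℤ, |psiZ ψ (0 - j)| ^ p) := by
        simpa only [Real.norm_eq_abs] using
          tsum_norm_sub_rpow_le hp (f := fun j : ℤ => psiZ ψ (n - j))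
            (g := fun j : ℤ => psiZ ψ (0 - j)) (htranslate n).summable (htranslate 0).summable
    _ = 2 ^ (p - 1) * (∑' j, |ψ j| ^ p + ∑' j, |ψ j| ^ p) := by
        rw [(htranslate n).tsum_eq, (htranslate 0).tsum_eq]
    _ = 2 ^ p * ∑' j, |ψ j| ^ p := by
        rw [← two_mul, ← mul_assoc, ← Real.rpow_add_one two_ne_zero, sub_add_cancel]

end Coefficients

theorem sup_wCoef_pow_le_general
    (p : ℝ) (hp : 1 < p) (ψ : ℕ → ℝ) (hψ : Summable fun j => |ψ j| ^ p) (n : ℕ) (m : ℤ) :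
    |wCoef ψ n m| ^ p ≤
      p * (∑' j : ℤ, |wCoef ψ n j| ^ p) ^ (1 / (p / (p - 1))) *
        (2 ^ p * ∑' j : ℕ, |ψ j| ^ p) ^ (1 / p) := by
  have hpq := Real.HolderConjugate.conjExponent hp
  calc |wCoef ψ n m| ^ p
      ≤ p * ((∑' j : ℤ, |wCoef ψ n j| ^ p) ^ (1 / (p / (p - 1))) *
          (∑' j : ℤ, |wCoef ψ n j - wCoef ψ n (j + 1)| ^ p) ^ (1 / p)) := by
        simpa only [Real.norm_eq_abs, Real.conjExponent] using
          norm_apply_rpow_le_tsum_mul_tsum_sub hpq (f := wCoef ψ n)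
            (summable_abs_wCoef_rpow hpq.pos hψ n) m
    _ ≤ p * ((∑' j : ℤ, |wCoef ψ n j| ^ p) ^ (1 / (p / (p - 1))) *
          (2 ^ p * ∑' j : ℕ, |ψ j| ^ p) ^ (1 / p)) := by
        gcongr
        exact tsum_abs_wCoef_sub_wCoef_add_one_rpow_le hp.le hψ n
    _ = _ := (mul_assoc _ _ _).symm

theorem sup_wCoef_pow_le
    (p : ℝ) (hp1 : 1 < p) (hp2 : p < 2)
    (ψ : ℕ → ℝ) (hψ : Summable fun j => |ψ j| ^ p)
    (n : ℕ) (hn : 1 ≤ n) :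
    (⨆ m : ℤ, |wCoef ψ n m| ^ p) ≤
      p * (∑' j : ℤ, |wCoef ψ n j| ^ p) ^ (1 / (p / (p - 1))) *
        (2 ^ p * ∑' j : ℕ, |ψ j| ^ p) ^ (1 / p) +
      2 ^ p * p * ∑' j : ℕ, |ψ j| ^ p := by
  exact ciSup_le fun m => (sup_wCoef_pow_le_general p hp1 ψ hψ n m).trans <|
    le_add_of_nonneg_right (by positivity)
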